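/- arXiv:2507.03146 — 6 statements merged into one kernel-verified Lean document; each statement's English description precedes it below -/
import Mathlib

section
/- Let 𝒳 be a measurable space, 𝒴 a finite nonempty set, and let 𝓔 be a measurable space of domains, where each domain e carries a probability measure P_e on 𝒳 × 𝒴. Let H be a class of set-valued predictors, L a loss function assigning to each pair (h, e) with h ∈ H a real number, and γ ∈ (0,1); assume each map e ↦ 𝟙_{L,γ}(h,e) is measurable. If H has the uniform convergence property with respect to L and γ (i.e., for every δ, ε ∈ (0,1) there exists an integer m(δ,ε) such that for every probability measure D on 𝓔 and every i.i.d. sample S of at least m(δ,ε) domains drawn from D, with probability at least 1−δ over S, every h ∈ H satisfies |E_{e∼D}[𝟙_{L,γ}(h,e)] − (1/|S|)Σ_{e∈S} 𝟙_{L,γ}(h,e)| ≤ ε), then the VC dimension VCdim_{L,γ}(H) is finite. -/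
open MeasureTheory Set

/-- If a hypothesis class `H` of set-valued predictors has the uniform
convergence property with respect to a loss `L` and threshold `γ` (in the multi-domain sense),
then its VC dimension with respect to `L, γ` is finite, i.e. there is a finite bound on the
cardinality of any set of domains shattered by `H`. -/
theorem uniformConvergence_implies_finite_VCdim
    {𝒳 : Type*} [MeasurableSpace 𝒳]
    {𝒴 : Type*} [Fintype 𝒴] [Nonempty 𝒴] [MeasurableSpace 𝒴]
    {ℰ : Type*} [MeasurableSpace ℰ]
    (P : ℰ → Measure (𝒳 × 𝒴)) (hP : ∀ e, IsProbabilityMeasure (P e))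
    {H : Type*} (hyp : H → 𝒳 → Set 𝒴)
    (L : (𝒳 → Set 𝒴) → Measure (𝒳 × 𝒴) → ℝ)
    (γ : ℝ) (hγ : γ ∈ Set.Ioo (0 : ℝ) 1)
    -- the performance indicator 𝟙_{L,γ}(h,e)
    (ind : H → ℰ → ℝ)
    (hind : ∀ h e, ind h e = if γ ≤ L (hyp h) (P e) then 1 else 0)
    -- measurability of the performance indicator in the domain
    (hmeas : ∀ h : H, Measurable fun e => ind h e)
    -- uniform convergence property of `H` with respect to `L`, `γ`
    (hUC : ∀ δ ε : ℝ, δ ∈ Set.Ioo (0 : ℝ) 1 → ε ∈ Set.Ioo (0 : ℝ) 1 →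
      ∃ m : ℕ, ∀ D : Measure ℰ, IsProbabilityMeasure D →
        ∀ k : ℕ, m ≤ k →
          ENNReal.ofReal (1 - δ) ≤
            (Measure.pi fun _ : Fin k => D)
              {S : Fin k → ℰ | ∀ h : H,
                abs ((∫ e, ind h e ∂D) - (1 / (k : ℝ)) * ∑ i, ind h (S i)) ≤ ε}) :
    -- conclusion: the VC dimension is finite
    ∃ M : ℕ, ∀ C : Finset ℰ,
      (∀ C' : Finset ℰ, C' ⊆ C → ∃ h : H,
        (∀ e ∈ C', ind h e = 1) ∧ (∀ e ∈ C, e ∉ C' → ind h e = 0)) →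
      C.card ≤ M := by
  classical
  obtain ⟨m, hm⟩ := hUC (1/2) (1/4) (by norm_num) (by norm_num)
  refine ⟨2 * (m + 1), fun C hC => ?_⟩
  by_contra hcard
  push Not at hcard
  have hCpos : 0 < C.card := by omega
  have : Nonempty C := (Finset.card_pos.mp hCpos).to_subtype
  have : Nonempty H := ⟨(hC ∅ (Finset.empty_subset _)).choose⟩
  choose! f hf1 hf0 using hC
  let : MeasurableSpace C := ⊤
  have : MeasurableSingletonClass C := ⟨fun _ => trivial⟩
  let μ : Measure C := (PMF.uniformOfFintype C).toMeasure
  have hval : Measurable (Subtype.val : C → ℰ) := fun _ _ => trivial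
  let D : Measure ℰ := μ.map Subtype.val
  have hD : IsProbabilityMeasure D := Measure.isProbabilityMeasure_map hval.aemeasurable
  have hint : ∀ C' ⊆ C, ∫ e, ind (f C') e ∂D = (C'.card : ℝ) / C.card := by
    intro C' hC'
    have h1 : ∫ e, ind (f C') e ∂D = ∫ e : C, ind (f C') e ∂μ :=
      integral_map hval.aemeasurable (hmeas _).aestronglyMeasurable
    rw [h1, PMF.integral_eq_sum]
    have h2 : ∑ e : C, ind (f C') e = C'.card := by
      rw [Finset.sum_coe_sort C (fun e => ind (f C') e),
        ← Finset.sum_subset hC' (fun e he he' => hf0 C' hC' e he he'),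
        Finset.sum_congr rfl (fun e he => hf1 C' hC' e he)]
      simp
    simp only [PMF.uniformOfFintype_apply, smul_eq_mul, ← Finset.mul_sum, h2]
    simp
    field_simp
  have key := hm D hD (m + 1) (by omega)
  let G : Set (Fin (m + 1) → ℰ) := ⋂ C' ∈ C.powerset,
    {S | abs ((∫ e, ind (f C') e ∂D) - (1 / ((m + 1 : ℕ) : ℝ)) * ∑ i, ind (f C') (S i)) ≤ 1/4}
  have hG : MeasurableSet G := by
    refine Finset.measurableSet_biInter _ (fun C' _ => ?_)
    refine measurableSet_le ?_ measurable_const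
    have : Measurable fun S : Fin (m + 1) → ℰ => ∑ i, ind (f C') (S i) :=
      Finset.measurable_sum _ (fun i _ => (hmeas (f C')).comp (measurable_pi_apply i))
    exact (measurable_const.sub (this.const_mul _)).abs
  have hzero : (Measure.pi fun _ : Fin (m + 1) => D) G = 0 := by
    have hmap : (Measure.pi fun _ : Fin (m + 1) => D) =
        (Measure.pi fun _ : Fin (m + 1) => μ).map (fun s i => (s i : ℰ)) :=
      (Measure.pi_map_pi (fun _ => hval.aemeasurable)).symm
    have hmm : Measurable (fun (s : Fin (m + 1) → C) i => (s i : ℰ)) :=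
      measurable_pi_lambda _ fun i => hval.comp (measurable_pi_apply i)
    rw [hmap, Measure.map_apply hmm hG]
    convert measure_empty (μ := Measure.pi fun _ : Fin (m + 1) => μ)
    ext s
    simp only [Set.mem_preimage, Set.mem_empty_iff_false, iff_false]
    intro hs
    let C' : Finset ℰ := Finset.univ.image (fun i => (s i : ℰ))
    have hC' : C' ⊆ C := by
      intro e he
      obtain ⟨i, -, rfl⟩ := Finset.mem_image.mp he
      exact (s i).2
    have hs' := Set.mem_iInter₂.mp hs C' (Finset.mem_powerset.mpr hC')
    simp only [Set.mem_setOf_eq] at hs'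
    have hsum : ∑ i, ind (f C') (s i) = ((m + 1 : ℕ) : ℝ) := by
      rw [Finset.sum_congr rfl (fun i _ => hf1 C' hC' (s i)
        (Finset.mem_image_of_mem _ (Finset.mem_univ i)))]
      simp
    have hc : C'.card ≤ m + 1 := by
      simpa using (Finset.card_image_le (s := Finset.univ) (f := fun i => (s i : ℰ)))
    have hle : (C'.card : ℝ) / C.card ≤ 1 / 2 := by
      rw [div_le_div_iff₀ (by exact_mod_cast hCpos) (by norm_num)]
      exact_mod_cast (by omega : C'.card * 2 ≤ 1 * C.card)
    rw [hint C' hC', hsum, one_div_mul_cancel (by positivity)] at hs'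
    have := (abs_le.mp hs').1
    linarith
  have := key.trans (measure_mono (t := G) (by
    intro S hS
    exact Set.mem_iInter₂.mpr fun C' _ => hS (f C')))
  rw [hzero] at this
  norm_num at this
end

section
/- Let 𝓔 be a set of domains, H a hypothesis class, L a loss function, and γ ∈ (0,1). Suppose H shatters, with respect to L and γ, a finite set C ⊆ 𝓔 of size 2m, and let D be the uniform probability distribution on C. Then for every subset S ⊆ C with |S| = m there exists h_S ∈ H such that (1/m)Σ_{e∈S} 𝟙_{L,γ}(h_S,e) = 0 while E_{e∼D}[𝟙_{L,γ}(h_S,e)] = 1/2. Consequently, for every ε < 1/2 and δ < 1, H does not satisfy the uniform convergence guarantee at sample size m: it is not the case that for every i.i.d. sample S of m domains from D, with probability at least 1−δ, all h ∈ H have |E_{e∼D}[𝟙_{L,γ}(h,e)] − (1/m)Σ_{e∈S}𝟙_{L,γ}(h,e)| ≤ ε. -/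
open MeasureTheory Set
open scoped ENNReal NNReal

/-- If `H` shatters (w.r.t. `L`, `γ`) a set `C` of `2m` domains, and `D` is the
uniform distribution on `C`, then for every `S ⊆ C` with `|S| = m` there is `h_S ∈ H` whose
empirical indicator average on `S` is `0` while its expected indicator under `D` is `1/2`.
Consequently, for every `ε < 1/2` and `δ < 1`, `H` fails the uniform convergence guarantee at
sample size `m`. -/
theorem shattering_uniform_failure
    {ℰ : Type*} [MeasurableSpace ℰ] [MeasurableSingletonClass ℰ]
    {H : Type*}
    (L : H → ℰ → ℝ) (γ : ℝ) (hγ : γ ∈ Set.Ioo (0 : ℝ) 1)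
    -- the performance indicator 𝟙_{L,γ}(h,e)
    (ind : H → ℰ → ℝ)
    (hind : ∀ h e, ind h e = if γ ≤ L h e then 1 else 0)
    (hmeas : ∀ h : H, Measurable fun e => ind h e)
    (m : ℕ) (hm : 0 < m)
    (C : Finset ℰ) (hC : C.card = 2 * m)
    -- `H` shatters `C` with respect to `L`, `γ`
    (hshat : ∀ C' : Finset ℰ, C' ⊆ C → ∃ h : H,
      (∀ e ∈ C', ind h e = 1) ∧ (∀ e ∈ C, e ∉ C' → ind h e = 0))
    -- `D` is the uniform probability distribution on `C`
    (D : Measure ℰ)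
    (hD : D = ((C.card : ℝ≥0∞))⁻¹ • ∑ e ∈ C, Measure.dirac e) :
    -- first conclusion: for every `S ⊆ C` of size `m` there is a bad hypothesis `h_S`
    (∀ S : Finset ℰ, S ⊆ C → S.card = m → ∃ hS : H,
      (1 / (m : ℝ)) * ∑ e ∈ S, ind hS e = 0 ∧ (∫ e, ind hS e ∂D) = 1 / 2) ∧
    -- consequently: uniform convergence fails at sample size `m`
    ∀ ε δ : ℝ, ε < 1 / 2 → δ < 1 →
      ¬ (ENNReal.ofReal (1 - δ) ≤
          (Measure.pi fun _ : Fin m => D)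
            {S : Fin m → ℰ | ∀ h : H,
              abs ((∫ e, ind h e ∂D) - (1 / (m : ℝ)) * ∑ i, ind h (S i)) ≤ ε}) := by
  classical
  have hm0 : (m : ℝ) ≠ 0 := by positivity
  have hcard0 : (C.card : ℝ≥0∞) ≠ 0 := by
    rw [hC]; exact_mod_cast (by omega : 2 * m ≠ 0)
  have hint : ∀ h : H, (∫ e, ind h e ∂D) = (2 * (m : ℝ))⁻¹ * ∑ e ∈ C, ind h e := by
    intro h
    rw [hD, integral_smul_measure, integral_finset_sum_measure]
    · simp [integral_dirac, hC]
    · intro e _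
      exact integrable_dirac (by simp)
  have key : ∀ S : Finset ℰ, S ⊆ C → S.card = m → ∃ hS : H,
      (∀ e ∈ S, ind hS e = 0) ∧ (∫ e, ind hS e ∂D) = 1 / 2 := by
    intro S hS hSm
    obtain ⟨h, h1, h0⟩ := hshat (C \ S) Finset.sdiff_subset
    have hz : ∀ e ∈ S, ind h e = 0 := fun e he => h0 e (hS he) (by simp [he])
    refine ⟨h, hz, ?_⟩
    rw [hint, ← Finset.sum_sdiff hS, Finset.sum_eq_zero hz, Finset.sum_congr rfl h1]
    have hc : (C \ S).card = m := by
      rw [Finset.card_sdiff_of_subset hS]; omega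
    simp only [Finset.sum_const, hc, nsmul_eq_mul]
    field_simp
    ring
  refine ⟨?_, ?_⟩
  · intro S hS hSm
    obtain ⟨h, h1, h2⟩ := key S hS hSm
    exact ⟨h, by rw [Finset.sum_eq_zero h1, mul_zero], h2⟩
  · intro ε δ hε hδ hle
    have hfin : IsFiniteMeasure D := by
      constructor
      rw [hD, Measure.smul_apply, Measure.finsetSum_apply]
      simp only [measure_univ, Finset.sum_const, smul_eq_mul, nsmul_eq_mul, mul_one]
      exact ENNReal.mul_lt_top (ENNReal.inv_lt_top.2 (pos_iff_ne_zero.2 hcard0))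
        (ENNReal.natCast_lt_top _)
    have hDC : D (C : Set ℰ)ᶜ = 0 := by
      rw [hD, Measure.smul_apply, Measure.finsetSum_apply, Finset.sum_eq_zero, smul_zero]
      intro e he
      rw [Measure.dirac_apply]
      simp [he]
    have hzero : (Measure.pi fun _ : Fin m => D)
            {S : Fin m → ℰ | ∀ h : H,
              abs ((∫ e, ind h e ∂D) - (1 / (m : ℝ)) * ∑ i, ind h (S i)) ≤ ε} = 0 := by
      refine measure_mono_null (t := ⋃ i : Fin m, Function.eval i ⁻¹' (C : Set ℰ)ᶜ) ?_ ?_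
      · intro S hS
        by_contra hcon
        have hmem : ∀ i, S i ∈ C := by simpa using hcon
        have hsub : Finset.univ.image S ⊆ C := by
          intro e he
          obtain ⟨i, -, rfl⟩ := Finset.mem_image.1 he
          exact hmem i
        obtain ⟨T, hT1, hT2, hT3⟩ := Finset.exists_subsuperset_card_eq (n := m) hsub
          (Finset.card_image_le.trans (by simp)) (by omega)
        obtain ⟨h, h1, h2⟩ := key T hT2 hT3
        have := hS h
        rw [h2, Finset.sum_eq_zero (fun i _ => h1 _ (hT1 (Finset.mem_image_of_mem S (Finset.mem_univ i))))] at this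
        rw [mul_zero, sub_zero, abs_of_pos (by norm_num)] at this
        linarith
      · refine measure_iUnion_null fun i => ?_
        exact Measure.pi_eval_preimage_null _ hDC
    rw [hzero] at hle
    have : 0 < ENNReal.ofReal (1 - δ) := ENNReal.ofReal_pos.2 (by linarith)
    exact absurd hle (not_le.2 this)
end

section
/- Let 𝒴 be a finite nonempty set and let 𝒳 = ℝ. Let H be the class of linear set-valued predictors on ℝ: for each h ∈ H and each y ∈ 𝒴 there are w_y, b_y ∈ ℝ with h_y(x) = 𝟙[w_y·x + b_y ≥ 0] and h(x) = {y : h_y(x) = 1}. Then for every γ ∈ (0,1), H cannot shatter, with respect to the recall loss L_recall and threshold γ, any set of more than 2|𝒴| domains (probability measures on ℝ × 𝒴 giving positive mass to each label); in particular VCdim_{L_recall,γ}(H) ≤ 2|𝒴|. -/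
open MeasureTheory Set ProbabilityTheory
open scoped ENNReal

/-- The recall loss `L_recall(h, P) = max_{y ∈ 𝒴} P(y ∉ h(X) | Y = y)` of a set-valued
predictor `h : 𝒳 → 𝒫(𝒴)` on a domain `P`. -/
noncomputable def recallLoss {𝒳 𝒴 : Type*} [MeasurableSpace 𝒳] [MeasurableSpace 𝒴]
    [Fintype 𝒴] [Nonempty 𝒴] (h : 𝒳 → Set 𝒴) (P : Measure (𝒳 × 𝒴)) : ℝ :=
  Finset.univ.sup' Finset.univ_nonempty fun y : 𝒴 =>
    ((P[|{p : 𝒳 × 𝒴 | p.2 = y}]) {p : 𝒳 × 𝒴 | y ∉ h p.1}).toReal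

lemma chain_first {ι α : Type*} [Nonempty α] (D : ι → Finset α)
    (hD : ∀ i j, D i ⊆ D j ∨ D j ⊆ D i) :
    ∃ a, ∀ i, (D i).Nonempty → a ∈ D i := by
  classical
  by_cases hne : ∃ i, (D i).Nonempty
  · have hex : ∃ n, ∃ i, (D i).Nonempty ∧ (D i).card = n := by
      obtain ⟨i, hi⟩ := hne
      exact ⟨_, i, hi, rfl⟩
    obtain ⟨i, hi, hc⟩ := Nat.find_spec hex
    obtain ⟨a, ha⟩ := hi
    refine ⟨a, fun j hj => ?_⟩
    rcases hD i j with h | h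
    · exact h ha
    · have hmin : Nat.find hex ≤ (D j).card := Nat.find_min' hex ⟨j, hj, rfl⟩
      rw [Finset.eq_of_subset_of_card_le h (by omega)]
      exact ha
  · push Not at hne
    refine ⟨Classical.arbitrary α, fun i hi => ?_⟩
    simp [hne i] at hi

lemma rays_chain (s : Bool) (u v : {q : ℝ × ℝ // if s then 0 ≤ q.1 else q.1 ≤ 0}) :
    {x : ℝ | ¬ 0 ≤ u.1.1 * x + u.1.2} ⊆ {x : ℝ | ¬ 0 ≤ v.1.1 * x + v.1.2} ∨
    {x : ℝ | ¬ 0 ≤ v.1.1 * x + v.1.2} ⊆ {x : ℝ | ¬ 0 ≤ u.1.1 * x + u.1.2} := by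
  cases s
  · have key : ∀ q : {q : ℝ × ℝ // if false then 0 ≤ q.1 else q.1 ≤ 0},
        IsUpperSet {x : ℝ | ¬ 0 ≤ q.1.1 * x + q.1.2} := by
      rintro ⟨⟨w, b⟩, hq⟩ x y hxy hx
      simp at hq hx ⊢
      nlinarith
    exact (key u).total (key v)
  · have key : ∀ q : {q : ℝ × ℝ // if true then 0 ≤ q.1 else q.1 ≤ 0},
        IsLowerSet {x : ℝ | ¬ 0 ≤ q.1.1 * x + q.1.2} := by
      rintro ⟨⟨w, b⟩, hq⟩ x y hxy hx
      simp at hq hx ⊢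
      nlinarith
    exact (key u).total (key v)

/-- On `𝒳 = ℝ`, the class of linear set-valued predictors
(`h_y(x) = 𝟙[w_y x + b_y ≥ 0]`) cannot shatter more than `2|𝒴|` domains with respect to the
recall loss and any threshold `γ ∈ (0,1)`; in particular its VC dimension is at most `2|𝒴|`. -/
theorem linear_one_dim_cannot_shatter
    {𝒴 : Type*} [Fintype 𝒴] [Nonempty 𝒴] [MeasurableSpace 𝒴]
    (γ : ℝ) (hγ : γ ∈ Set.Ioo (0 : ℝ) 1)
    (C : Finset (Measure (ℝ × 𝒴)))
    (hprob : ∀ P ∈ C, IsProbabilityMeasure P)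
    (hpos : ∀ P ∈ C, ∀ y : 𝒴, 0 < P {p : ℝ × 𝒴 | p.2 = y})
    -- if the linear class shatters `C` w.r.t. `L_recall`, `γ` ...
    (hshat : ∀ C' : Finset (Measure (ℝ × 𝒴)), C' ⊆ C →
      ∃ w b : 𝒴 → ℝ,
        (∀ P ∈ C', γ ≤ recallLoss (fun x : ℝ => {y : 𝒴 | 0 ≤ w y * x + b y}) P) ∧
        (∀ P ∈ C, P ∉ C' →
          recallLoss (fun x : ℝ => {y : 𝒴 | 0 ≤ w y * x + b y}) P < γ)) :
    -- ... then `C` has at most `2|𝒴|` elements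
    C.card ≤ 2 * Fintype.card 𝒴 := by
  classical
  let m : 𝒴 → Measure (ℝ × 𝒴) → Set ℝ → ℝ := fun y P A =>
    ((P[|{p : ℝ × 𝒴 | p.2 = y}]) {p : ℝ × 𝒴 | p.1 ∈ A}).toReal
  have hm : ∀ y, ∀ P ∈ C, ∀ A B : Set ℝ, A ⊆ B → m y P A ≤ m y P B := by
    intro y P hP A B hAB
    have := hprob P hP
    have := cond_isProbabilityMeasure (hpos P hP y).ne'
    exact ENNReal.toReal_mono (measure_ne_top _ _) (measure_mono fun p hp => hAB hp)
  have hloss : ∀ (w b : 𝒴 → ℝ) (P : Measure (ℝ × 𝒴)),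
      γ ≤ recallLoss (fun x : ℝ => {y : 𝒴 | 0 ≤ w y * x + b y}) P ↔
        ∃ y, γ ≤ m y P {x : ℝ | ¬ 0 ≤ w y * x + b y} := by
    intro w b P
    unfold recallLoss
    rw [Finset.le_sup'_iff]
    simp only [Finset.mem_univ, true_and]
    rfl
  let D : (k : 𝒴 × Bool) → {q : ℝ × ℝ // if k.2 then 0 ≤ q.1 else q.1 ≤ 0} →
      Finset (Measure (ℝ × 𝒴)) := fun k q =>
    C.filter fun P => γ ≤ m k.1 P {x : ℝ | ¬ 0 ≤ q.1.1 * x + q.1.2}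
  have hsub : ∀ k u v, {x : ℝ | ¬ 0 ≤ u.1.1 * x + u.1.2} ⊆ {x : ℝ | ¬ 0 ≤ v.1.1 * x + v.1.2} →
      D k u ⊆ D k v := by
    intro k u v h P hP
    simp only [D, Finset.mem_filter] at hP ⊢
    exact ⟨hP.1, hP.2.trans (hm _ _ hP.1 _ _ h)⟩
  have hfirst : ∀ k, ∃ a, ∀ q, (D k q).Nonempty → a ∈ D k q := fun k =>
    chain_first (D k) fun u v => (rays_chain k.2 u v).imp (hsub k u v) (hsub k v u)
  choose f hf using hfirst
  by_contra! hcard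
  have hlt : (Finset.univ.image f).card < C.card := by
    refine lt_of_le_of_lt Finset.card_image_le ?_
    simpa [mul_comm] using hcard
  obtain ⟨Q, hQC, hQ⟩ := Finset.exists_mem_notMem_of_card_lt_card hlt
  obtain ⟨w, b, h1, h2⟩ := hshat (C \ Finset.univ.image f) Finset.sdiff_subset
  obtain ⟨y, hy⟩ := (hloss w b Q).1 (h1 Q (Finset.mem_sdiff.2 ⟨hQC, hQ⟩))
  have hs : ∃ s : Bool, if s then 0 ≤ w y else w y ≤ 0 := by
    rcases le_total 0 (w y) with h | h
    · exact ⟨true, by simpa using h⟩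
    · exact ⟨false, by simpa using h⟩
  obtain ⟨s, hs⟩ := hs
  have hmem := hf (y, s) ⟨(w y, b y), hs⟩ ⟨Q, Finset.mem_filter.2 ⟨hQC, hy⟩⟩
  obtain ⟨hPC, hP⟩ := Finset.mem_filter.1 hmem
  refine absurd ((hloss w b _).2 ⟨y, hP⟩) (not_le.2 (h2 _ hPC ?_))
  simp
end

section
/- Let 𝒴 be a finite nonempty set, let d ≥ 2, and let 𝒳 = ℝ^d. Let H be the class of linear set-valued predictors: for each h ∈ H and y ∈ 𝒴 there are w_y ∈ ℝ^d and b_y ∈ ℝ with h_y(x) = 𝟙[⟨w_y, x⟩ + b_y ≥ 0] and h(x) = {y : h_y(x) = 1}. Then for every γ ∈ (0,1) and every m ∈ ℕ there exists a set of m domains (probability measures on ℝ^d × 𝒴 giving positive mass to each label) that is shattered by H with respect to L_recall and γ; in particular VCdim_{L_recall,γ}(H) = ∞. -/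
open MeasureTheory Set ProbabilityTheory Matrix
open scoped ENNReal

/-- The point of `ℝ^d` with first two coordinates `a`, `c`. -/
noncomputable def planePt {d : ℕ} (i j : Fin d) (a c : ℝ) : Fin d → ℝ :=
  Pi.single i a + Pi.single j c

lemma planePt_dot {d : ℕ} {i j : Fin d} (hij : i ≠ j) (a c a' c' : ℝ) :
    planePt i j a c ⬝ᵥ planePt i j a' c' = a * a' + c * c' := by
  simp [planePt, dotProduct_add, hij, hij.symm]

/-- Geometry and weights: `m` probability measures on `ℝ^d` and, for each `S`, an affine
functional whose open negative half space has mass `γ` or less than `γ` according to `S`. -/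
lemma exists_measures (d : ℕ) (hd : 2 ≤ d) (γ : ℝ) (hγ : γ ∈ Set.Ioo (0 : ℝ) 1) (m : ℕ) :
    ∃ μ : Fin m → Measure (Fin d → ℝ), (∀ i, IsProbabilityMeasure (μ i)) ∧
      ∀ S : Finset (Fin m), ∃ (w : Fin d → ℝ) (b : ℝ),
        (∀ i ∈ S, γ ≤ (μ i {x | w ⬝ᵥ x + b < 0}).toReal) ∧
        (∀ i ∉ S, (μ i {x | w ⬝ᵥ x + b < 0}).toReal < γ) := by
  classical
  obtain ⟨h0, h1⟩ := hγ
  let i0 : Fin d := ⟨0, by omega⟩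
  let i1 : Fin d := ⟨1, by omega⟩
  have hij : i0 ≠ i1 := by simp [i0, i1]
  let N : ℕ := Fintype.card (Finset (Fin m))
  have hN : 0 < (N : ℝ) := by
    have : 0 < N := Fintype.card_pos
    exact_mod_cast this
  let e : Finset (Fin m) → ℝ := fun S => ((Fintype.equivFin (Finset (Fin m)) S : ℕ) : ℝ)
  have he0 : ∀ S, 0 ≤ e S := fun S => Nat.cast_nonneg _
  have heN : ∀ S, e S < N := fun S => by
    have := (Fintype.equivFin (Finset (Fin m)) S).isLt
    simp only [e, N]
    exact_mod_cast this
  have hesep : ∀ S T, S ≠ T → 1 ≤ (e S - e T) ^ 2 := by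
    intro S T hST
    have hne : ((Fintype.equivFin (Finset (Fin m)) S : ℕ) : ℤ) -
        ((Fintype.equivFin (Finset (Fin m)) T : ℕ) : ℤ) ≠ 0 := by
      intro h
      apply hST
      apply (Fintype.equivFin (Finset (Fin m))).injective
      apply Fin.ext
      omega
    have h2 : (1 : ℤ) ≤ (((Fintype.equivFin (Finset (Fin m)) S : ℕ) : ℤ) -
        ((Fintype.equivFin (Finset (Fin m)) T : ℕ) : ℤ)) ^ 2 := by
      have : 0 < (((Fintype.equivFin (Finset (Fin m)) S : ℕ) : ℤ) -
        ((Fintype.equivFin (Finset (Fin m)) T : ℕ) : ℤ)) ^ 2 := by positivity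
      omega
    simp only [e]
    exact_mod_cast h2
  let c : ℝ := γ * (1 - γ) / N
  have hc0 : 0 < c := by
    have : 0 < 1 - γ := by linarith
    positivity
  have hcN : c * N = γ * (1 - γ) := by simp only [c]; field_simp
  have hN1 : (1 : ℝ) ≤ N := by
    have : 0 < N := Fintype.card_pos
    exact_mod_cast this
  have hcγ : c ≤ γ := by nlinarith
  have hr : 0 ≤ 1 - γ + c - c * N := by nlinarith
  let A : Fin d → ℝ := planePt i0 i1 0 (-(N : ℝ) ^ 2)
  let B : Fin d → ℝ := planePt i0 i1 0 1
  let z : Finset (Fin m) → Fin d → ℝ := fun S => planePt i0 i1 (e S) (e S ^ 2)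
  let p : Fin m → Finset (Fin m) → Fin d → ℝ := fun i S => if i ∈ S then z S else B
  let μ : Fin m → Measure (Fin d → ℝ) := fun i =>
    ENNReal.ofReal (γ - c) • Measure.dirac A
      + ∑ S : Finset (Fin m), ENNReal.ofReal c • Measure.dirac (p i S)
      + ENNReal.ofReal (1 - γ + c - c * N) • Measure.dirac B
  have hμ : ∀ i T, MeasurableSet T → μ i T =
      ENNReal.ofReal (γ - c) * T.indicator 1 A
      + ∑ S : Finset (Fin m), ENNReal.ofReal c * T.indicator 1 (p i S)
      + ENNReal.ofReal (1 - γ + c - c * N) * T.indicator 1 B := by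
    intro i T hT
    simp [μ, Measure.dirac_apply' _ hT]
  refine ⟨μ, ?_, ?_⟩
  · intro i
    constructor
    rw [hμ i _ MeasurableSet.univ]
    simp only [Set.indicator_univ, Pi.one_apply, mul_one, Finset.sum_const, Finset.card_univ,
      nsmul_eq_mul]
    change ENNReal.ofReal (γ - c) + (N : ℝ≥0∞) * ENNReal.ofReal c + _ = 1
    rw [← ENNReal.ofReal_natCast N, ← ENNReal.ofReal_mul hN.le,
      ← ENNReal.ofReal_add (by linarith) (by positivity),
      ← ENNReal.ofReal_add (by nlinarith) hr]
    rw [show γ - c + N * c + (1 - γ + c - c * N) = 1 by ring, ENNReal.ofReal_one]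
  · intro S
    let w : Fin d → ℝ := planePt i0 i1 (-2 * e S) 1
    let b : ℝ := e S ^ 2 - 1 / 2
    have hT : MeasurableSet {x : Fin d → ℝ | w ⬝ᵥ x + b < 0} := by
      apply measurableSet_lt _ measurable_const
      unfold dotProduct
      fun_prop
    have hA : A ∈ {x : Fin d → ℝ | w ⬝ᵥ x + b < 0} := by
      simp only [Set.mem_setOf_eq, w, A, b, planePt_dot hij]
      nlinarith [heN S, he0 S]
    have hB : B ∉ {x : Fin d → ℝ | w ⬝ᵥ x + b < 0} := by
      simp only [Set.mem_setOf_eq, w, B, b, planePt_dot hij]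
      nlinarith [heN S, he0 S]
    have hz : ∀ U, z U ∈ {x : Fin d → ℝ | w ⬝ᵥ x + b < 0} ↔ U = S := by
      intro U
      simp only [Set.mem_setOf_eq, w, z, b, planePt_dot hij]
      constructor
      · intro h
        by_contra hne
        nlinarith [hesep U S hne]
      · rintro rfl
        nlinarith
    have hp : ∀ i U, p i U ∈ {x : Fin d → ℝ | w ⬝ᵥ x + b < 0} ↔ (U = S ∧ i ∈ S) := by
      intro i U
      by_cases hi : i ∈ U
      · simp only [p, if_pos hi, hz]
        constructor
        · rintro rfl; exact ⟨rfl, hi⟩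
        · exact fun h => h.1
      · simp only [p, if_neg hi]
        constructor
        · intro h; exact absurd h hB
        · rintro ⟨rfl, h⟩; exact absurd h hi
    refine ⟨w, b, ?_, ?_⟩
    · intro i hi
      rw [hμ i _ hT, Set.indicator_of_mem hA, Set.indicator_of_notMem hB,
        Finset.sum_eq_single S, Set.indicator_of_mem ((hp i S).2 ⟨rfl, hi⟩)]
      · simp only [Pi.one_apply, mul_one, mul_zero, add_zero]
        rw [← ENNReal.ofReal_add (by linarith) hc0.le, ENNReal.toReal_ofReal (by linarith)]
        linarith
      · intro U _ hU
        rw [Set.indicator_of_notMem (fun h => hU ((hp i U).1 h).1), mul_zero]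
      · simp
    · intro i hi
      rw [hμ i _ hT, Set.indicator_of_mem hA, Set.indicator_of_notMem hB,
        Finset.sum_eq_zero]
      · simp only [Pi.one_apply, mul_one, mul_zero, add_zero]
        rw [ENNReal.toReal_ofReal (by linarith)]
        linarith
      · intro U _
        rw [Set.indicator_of_notMem (fun h => hi ((hp i U).1 h).2), mul_zero]

/-- A probability measure on labels with positive (outer) mass at each label. -/
lemma exists_label_measure (𝒴 : Type*) [Fintype 𝒴] [Nonempty 𝒴] [MeasurableSpace 𝒴] :
    ∃ ν : Measure 𝒴, IsProbabilityMeasure ν ∧ ∀ y, 0 < ν {y} := by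
  refine ⟨∑ y : 𝒴, (Fintype.card 𝒴 : ℝ≥0∞)⁻¹ • Measure.dirac y, ⟨?_⟩, ?_⟩
  · simp only [Measure.coe_finset_sum, Finset.sum_apply, Measure.smul_apply, measure_univ,
      smul_eq_mul, mul_one, Finset.sum_const, Finset.card_univ, nsmul_eq_mul]
    exact ENNReal.mul_inv_cancel (by simp) (by simp)
  · intro y
    simp only [Measure.coe_finset_sum, Finset.sum_apply, Measure.smul_apply, smul_eq_mul]
    have h1 : 1 ≤ Measure.dirac y ({y} : Set 𝒴) := by
      have := Measure.le_dirac_apply (a := y) (s := {y})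
      simpa using this
    refine lt_of_lt_of_le ?_ (Finset.single_le_sum (f := fun x : 𝒴 =>
      (Fintype.card 𝒴 : ℝ≥0∞)⁻¹ * Measure.dirac x ({y} : Set 𝒴)) (fun _ _ => zero_le) 
      (Finset.mem_univ y))
    refine ENNReal.mul_pos (by simp) ?_
    exact (lt_of_lt_of_le zero_lt_one h1).ne'

lemma recallLoss_prod {𝒴 : Type*} [Fintype 𝒴] [Nonempty 𝒴] [MeasurableSpace 𝒴] {d : ℕ}
    (μ : Measure (Fin d → ℝ)) [IsProbabilityMeasure μ] (ν : Measure 𝒴) [IsProbabilityMeasure ν]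
    (hν : ∀ y, 0 < ν {y}) (w : Fin d → ℝ) (b : ℝ) :
    recallLoss (fun x : Fin d → ℝ => {y : 𝒴 | 0 ≤ (fun _ : 𝒴 => w) y ⬝ᵥ x + (fun _ : 𝒴 => b) y})
      (μ.prod ν) = (μ {x | w ⬝ᵥ x + b < 0}).toReal := by
  unfold recallLoss
  have hT : MeasurableSet {x : Fin d → ℝ | w ⬝ᵥ x + b < 0} := by
    apply measurableSet_lt _ measurable_const
    unfold dotProduct
    fun_prop
  have key : ∀ y : 𝒴, ((μ.prod ν)[|{p : (Fin d → ℝ) × 𝒴 | p.2 = y}])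
      {p : (Fin d → ℝ) × 𝒴 | y ∉ {y : 𝒴 | 0 ≤ (fun _ : 𝒴 => w) y ⬝ᵥ p.1 + (fun _ : 𝒴 => b) y}}
      = μ {x | w ⬝ᵥ x + b < 0} := by
    intro y
    have e1 : {p : (Fin d → ℝ) × 𝒴 |
        y ∉ {y : 𝒴 | 0 ≤ (fun _ : 𝒴 => w) y ⬝ᵥ p.1 + (fun _ : 𝒴 => b) y}}
        = Prod.fst ⁻¹' {x : Fin d → ℝ | w ⬝ᵥ x + b < 0} := by
      ext p; simp
    have e2 : {p : (Fin d → ℝ) × 𝒴 | p.2 = y} = Set.univ ×ˢ {y} := by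
      ext p; simp
    have e3 : Prod.fst ⁻¹' {x : Fin d → ℝ | w ⬝ᵥ x + b < 0} ∩ (Set.univ ×ˢ ({y} : Set 𝒴))
        = {x : Fin d → ℝ | w ⬝ᵥ x + b < 0} ×ˢ {y} := by
      ext p; simp
    rw [e1, e2, ProbabilityTheory.cond, Measure.smul_apply,
      Measure.restrict_apply (measurable_fst hT), e3, Measure.prod_prod, Measure.prod_prod,
      measure_univ, one_mul, smul_eq_mul, mul_comm (μ _), ← mul_assoc,
      ENNReal.inv_mul_cancel (hν y).ne' (measure_ne_top _ _), one_mul]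
  simp only [key]
  exact Finset.sup'_const _ _

/-- For `d ≥ 2`, the class of linear set-valued predictors on `ℝ^d`
(`h_y(x) = 𝟙[⟨w_y, x⟩ + b_y ≥ 0]`) shatters, for every `γ ∈ (0,1)` and every `m`, some set of
`m` domains with respect to the recall loss and `γ`; in particular
`VCdim_{L_recall,γ}(H) = ∞`. -/
theorem linear_highdim_shatter
    {𝒴 : Type*} [Fintype 𝒴] [Nonempty 𝒴] [MeasurableSpace 𝒴]
    (d : ℕ) (hd : 2 ≤ d)
    (γ : ℝ) (hγ : γ ∈ Set.Ioo (0 : ℝ) 1) (m : ℕ) :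
    ∃ C : Finset (Measure ((Fin d → ℝ) × 𝒴)),
      C.card = m ∧
      (∀ P ∈ C, IsProbabilityMeasure P) ∧
      (∀ P ∈ C, ∀ y : 𝒴, 0 < P {p : (Fin d → ℝ) × 𝒴 | p.2 = y}) ∧
      -- `C` is shattered by the linear class w.r.t. `L_recall`, `γ`
      (∀ C' : Finset (Measure ((Fin d → ℝ) × 𝒴)), C' ⊆ C →
        ∃ w : 𝒴 → (Fin d → ℝ), ∃ b : 𝒴 → ℝ,
          (∀ P ∈ C',
            γ ≤ recallLoss (fun x : Fin d → ℝ => {y : 𝒴 | 0 ≤ w y ⬝ᵥ x + b y}) P) ∧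
          (∀ P ∈ C, P ∉ C' →
            recallLoss (fun x : Fin d → ℝ => {y : 𝒴 | 0 ≤ w y ⬝ᵥ x + b y}) P < γ)) := by
  classical
  obtain ⟨μ, hμ, hS⟩ := exists_measures d hd γ hγ m
  obtain ⟨ν, hν, hpos⟩ := exists_label_measure 𝒴
  have hinj : Function.Injective fun i => (μ i).prod ν := by
    intro i j hij
    by_contra hne
    obtain ⟨w, b, h1, h2⟩ := hS {i}
    have a1 := h1 i (by simp)
    have a2 := h2 j (by simpa using fun h => hne h.symm)
    rw [← recallLoss_prod (μ i) ν hpos] at a1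
    rw [← recallLoss_prod (μ j) ν hpos] at a2
    simp only at hij
    rw [hij] at a1
    linarith
  refine ⟨Finset.univ.image fun i => (μ i).prod ν, ?_, ?_, ?_, ?_⟩
  · rw [Finset.card_image_of_injective _ hinj]; simp
  · simp only [Finset.mem_image, Finset.mem_univ, true_and]
    rintro _ ⟨i, rfl⟩
    infer_instance
  · simp only [Finset.mem_image, Finset.mem_univ, true_and]
    rintro _ ⟨i, rfl⟩ y
    have e2 : {p : (Fin d → ℝ) × 𝒴 | p.2 = y} = Set.univ ×ˢ {y} := by
      ext p; simp
    rw [e2, Measure.prod_prod, measure_univ, one_mul]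
    exact hpos y
  · intro C' hC'
    obtain ⟨w, b, h1, h2⟩ := hS (Finset.univ.filter fun i => (μ i).prod ν ∈ C')
    refine ⟨fun _ => w, fun _ => b, ?_, ?_⟩
    · intro P hP
      obtain ⟨i, -, rfl⟩ := Finset.mem_image.1 (hC' hP)
      rw [recallLoss_prod (μ i) ν hpos]
      exact h1 i (by simpa using hP)
    · intro P hPC hP
      obtain ⟨i, -, rfl⟩ := Finset.mem_image.1 hPC
      rw [recallLoss_prod (μ i) ν hpos]
      exact h2 i (by simpa using hP)
end

section
/- Let 𝒴 be a finite nonempty set, d ≥ 1, and 𝒳 = ℝ^d. Let H be the class of rectangular set-valued predictors: for each h ∈ H and y ∈ 𝒴, h_y(x) = 𝟙[x ∈ R_y] for some axis-aligned closed box R_y ⊆ ℝ^d, and h(x) = {y : h_y(x) = 1}. Then for every γ ∈ (0,1) and every n ∈ ℕ there exists a set of n domains (probability measures on ℝ^d × 𝒴 giving positive mass to each label) that is shattered by H with respect to L_recall and γ. -/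
open MeasureTheory Set ProbabilityTheory
open scoped ENNReal

lemma aux_recall {𝒳 𝒴 : Type*} [MeasurableSpace 𝒳] [MeasurableSpace 𝒴]
    [Fintype 𝒴] [Nonempty 𝒴] (μ : Measure 𝒳) [IsProbabilityMeasure μ]
    (κ : Measure 𝒴) [IsProbabilityMeasure κ] (hκ : ∀ y, 0 < κ {y}) (B : Set 𝒳)
    (hB : MeasurableSet B) :
    recallLoss (fun x => {_y : 𝒴 | x ∈ B}) (μ.prod κ) = (μ Bᶜ).toReal := by
  have key : ∀ y : 𝒴, ((μ.prod κ)[|{p : 𝒳 × 𝒴 | p.2 = y}])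
      {p : 𝒳 × 𝒴 | y ∉ (fun x => {_y : 𝒴 | x ∈ B}) p.1} = μ Bᶜ := by
    intro y
    have h1 : {p : 𝒳 × 𝒴 | p.2 = y} = univ ×ˢ {y} := by ext p; simp
    have h2 : {p : 𝒳 × 𝒴 | y ∉ (fun x => {_y : 𝒴 | x ∈ B}) p.1} = Bᶜ ×ˢ univ := by ext p; simp
    have h3 : (Bᶜ ×ˢ (univ : Set 𝒴)) ∩ (univ ×ˢ {y}) = Bᶜ ×ˢ {y} := by ext p; simp
    rw [h1, h2, ProbabilityTheory.cond, Measure.smul_apply,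
      Measure.restrict_apply (hB.compl.prod MeasurableSet.univ), h3, Measure.prod_prod,
      Measure.prod_prod, measure_univ, one_mul, smul_eq_mul, mul_comm (μ Bᶜ), ← mul_assoc,
      ENNReal.inv_mul_cancel (hκ y).ne' (measure_ne_top _ _), one_mul]
  unfold recallLoss
  simp only [key]
  exact Finset.sup'_const _ _

lemma aux_labels (𝒴 : Type*) [Fintype 𝒴] [Nonempty 𝒴] [MeasurableSpace 𝒴] :
    ∃ κ : Measure 𝒴, IsProbabilityMeasure κ ∧ ∀ y, 0 < κ {y} := by
  refine ⟨∑ y : 𝒴, (Fintype.card 𝒴 : ℝ≥0∞)⁻¹ • Measure.dirac y, ⟨?_⟩, fun y => ?_⟩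
  · rw [Measure.finsetSum_apply]
    simp only [Measure.smul_apply, measure_univ, smul_eq_mul, mul_one, Finset.sum_const,
      Finset.card_univ, nsmul_eq_mul]
    exact ENNReal.mul_inv_cancel (by simp) (by simp)
  · rw [Measure.finsetSum_apply]
    refine lt_of_lt_of_le ?_ (Finset.single_le_sum (fun _ _ => zero_le) (Finset.mem_univ y))
    rw [Measure.smul_apply, Measure.dirac_apply_of_mem (mem_singleton y)]
    simp

/-- Finitely supported measure with given weights and atoms. -/
noncomputable def auxM {𝒳 T : Type*} [MeasurableSpace 𝒳] [Fintype T] (w : T → ℝ) (pt : T → 𝒳) :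
    Measure 𝒳 := ∑ t, ENNReal.ofReal (w t) • Measure.dirac (pt t)

open Classical in
lemma auxM_apply {𝒳 T : Type*} [MeasurableSpace 𝒳] [Fintype T] (w : T → ℝ) (hw : ∀ t, 0 ≤ w t)
    (pt : T → 𝒳) (B : Set 𝒳) (hB : MeasurableSet B) :
    auxM w pt B = ENNReal.ofReal (∑ t, if pt t ∈ B then w t else 0) := by
  rw [auxM, Measure.finsetSum_apply, ENNReal.ofReal_sum_of_nonneg]
  · refine Finset.sum_congr rfl fun t _ => ?_
    rw [Measure.smul_apply, Measure.dirac_apply' _ hB]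
    by_cases h : pt t ∈ B <;> simp [h]
  · intro t _; split_ifs <;> simp [hw]

/-- Core: `n` measures on `ℝ^d` whose complement masses are shattered. -/
lemma aux_core (d : ℕ) (hd : 1 ≤ d) (γ : ℝ) (hγ : γ ∈ Set.Ioo (0 : ℝ) 1) (n : ℕ) :
    ∃ μ : Fin n → Measure (Fin d → ℝ), (∀ i, IsProbabilityMeasure (μ i)) ∧
      ∀ S : Finset (Fin n), ∃ l u : Fin d → ℝ,
        (∀ i ∈ S, γ ≤ (μ i (Icc l u)ᶜ).toReal) ∧ ∀ i ∉ S, (μ i (Icc l u)ᶜ).toReal < γ := by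
  classical
  obtain ⟨h0, h1⟩ := hγ
  obtain ⟨N, pos, hinj, hpos0, hposN⟩ : ∃ N : ℝ, ∃ pos : Finset (Fin n) → ℝ,
      Function.Injective pos ∧ (∀ S, 0 < pos S) ∧ ∀ S, pos S < N := by
    refine ⟨Fintype.card (Finset (Fin n)) + 1, fun S => (Fintype.equivFin _ S : ℕ) + 1, ?_, ?_, ?_⟩
    · intro a b h
      simpa [Fin.val_inj] using h
    · intro S; positivity
    · intro S
      have := (Fintype.equivFin _ S).2
      have h2 : ((Fintype.equivFin _ S : ℕ) : ℝ) < Fintype.card (Finset (Fin n)) := by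
        exact_mod_cast this
      linarith
  let m : Fin n → ℝ := fun i => ∑ S : Finset (Fin n), if i ∈ S then 0 else 1
  have hm : ∀ i, 0 < m i := fun i =>
    Finset.sum_pos' (fun S _ => by split_ifs <;> simp) ⟨∅, Finset.mem_univ _, by simp⟩
  let w : Fin n → Finset (Fin n) → ℝ := fun i S => (if i ∈ S then 0 else 1) * (γ * (1 - γ) / m i)
  have hc : ∀ i, 0 < γ * (1 - γ) / m i := fun i => div_pos (mul_pos h0 (by linarith)) (hm i)
  have hw0 : ∀ i S, 0 ≤ w i S := fun i S =>
    mul_nonneg (by split_ifs <;> simp) (hc i).le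
  have hwsum : ∀ i, ∑ S, w i S = γ * (1 - γ) := fun i => by
    simp only [w]
    rw [← Finset.sum_mul]
    exact mul_div_cancel₀ _ (hm i).ne'
  let W : Fin n → (Finset (Fin n) ⊕ Finset (Fin n)) ⊕ Bool → ℝ := fun i =>
    Sum.elim (Sum.elim (w i) (w i)) (fun b => if b then γ ^ 2 else (1 - γ) ^ 2)
  let q : (Finset (Fin n) ⊕ Finset (Fin n)) ⊕ Bool → ℝ :=
    Sum.elim (Sum.elim (fun S => pos S - N) pos) (fun b => if b then N else 0)
  have hW : ∀ i t, 0 ≤ W i t := by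
    rintro i ((S | S) | (_ | _))
    · exact hw0 i S
    · exact hw0 i S
    · simp only [W, Sum.elim_inr]; positivity
    · simp only [W, Sum.elim_inr]; positivity
  let j0 : Fin d := ⟨0, hd⟩
  have hbox : ∀ a b x : ℝ, ((fun _ : Fin d => x) ∈ (Icc (fun _ => a) (fun _ => b))ᶜ) ↔
      ¬ (a ≤ x ∧ x ≤ b) := by
    intro a b x
    rw [mem_compl_iff, not_iff_not]
    exact ⟨fun h => ⟨h.1 j0, h.2 j0⟩, fun h => ⟨fun _ => h.1, fun _ => h.2⟩⟩
  have hloss : ∀ (i : Fin n) (S : Finset (Fin n)),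
      (auxM (W i) (fun t => fun _ : Fin d => q t)
        (Icc (fun _ => pos S - N) (fun _ => pos S))ᶜ).toReal = γ - w i S := by
    intro i S
    rw [auxM_apply _ (hW i) _ _ measurableSet_Icc.compl, ENNReal.toReal_ofReal
      (Finset.sum_nonneg fun t _ => by split_ifs <;> simp [hW])]
    simp only [hbox]
    rw [Fintype.sum_sum_type, Fintype.sum_sum_type, Fintype.sum_bool, ← Finset.sum_add_distrib]
    have hS : ∀ T : Finset (Fin n),
        ((if ¬ (pos S - N ≤ q (Sum.inl (Sum.inl T)) ∧ q (Sum.inl (Sum.inl T)) ≤ pos S) then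
            W i (Sum.inl (Sum.inl T)) else 0) +
          if ¬ (pos S - N ≤ q (Sum.inl (Sum.inr T)) ∧ q (Sum.inl (Sum.inr T)) ≤ pos S) then
            W i (Sum.inl (Sum.inr T)) else 0) = w i T - if T = S then w i T else 0 := by
      intro T
      have q1 : q (Sum.inl (Sum.inl T)) = pos T - N := rfl
      have q2 : q (Sum.inl (Sum.inr T)) = pos T := rfl
      have w1 : W i (Sum.inl (Sum.inl T)) = w i T := rfl
      have w2 : W i (Sum.inl (Sum.inr T)) = w i T := rfl
      have := hpos0 S; have := hpos0 T; have := hposN S; have := hposN T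
      rcases lt_trichotomy (pos T) (pos S) with h | h | h
      · have hne : T ≠ S := fun e => h.ne (by rw [e])
        rw [if_pos (by rintro ⟨_, _⟩; linarith),
          if_neg (not_not.2 ⟨by linarith, by linarith⟩), if_neg hne]; linarith
      · have he : T = S := hinj h
        subst he
        rw [if_neg (not_not.2 ⟨by linarith, by linarith⟩),
          if_neg (not_not.2 ⟨by linarith, by linarith⟩), if_pos rfl]; linarith
      · have hne : T ≠ S := fun e => h.ne (by rw [e])
        rw [if_neg (not_not.2 ⟨by linarith, by linarith⟩),
          if_pos (by rintro ⟨_, _⟩; linarith), if_neg hne]; linarith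
    rw [Finset.sum_congr rfl fun T _ => hS T, Finset.sum_sub_distrib, hwsum,
      Finset.sum_ite_eq' Finset.univ S, if_pos (Finset.mem_univ _)]
    have := hpos0 S; have := hposN S
    have q1 : q (Sum.inr true) = N := rfl
    have q2 : q (Sum.inr false) = 0 := rfl
    have w1 : W i (Sum.inr true) = γ ^ 2 := rfl
    rw [if_pos (by rintro ⟨_, _⟩; linarith), if_neg (not_not.2 ⟨by linarith, by linarith⟩), w1]
    ring
  refine ⟨fun i => auxM (W i) (fun t => fun _ => q t), fun i => ⟨?_⟩, fun S =>
    ⟨fun _ => pos S - N, fun _ => pos S, fun i hi => ?_, fun i hi => ?_⟩⟩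
  · rw [auxM_apply _ (hW i) _ _ MeasurableSet.univ]
    simp only [mem_univ, if_true]
    rw [Fintype.sum_sum_type, Fintype.sum_sum_type, Fintype.sum_bool]
    simp only [W, Sum.elim_inl, Sum.elim_inr, hwsum, if_true]
    rw [← ENNReal.ofReal_one]
    congr 1
    simp
    ring
  · rw [hloss]; simp [w, hi]
  · rw [hloss]
    have : w i S = γ * (1 - γ) / m i := by simp [w, hi]
    linarith [hc i]

/-- For every `d ≥ 1`, `γ ∈ (0,1)` and `n`, the class of rectangular set-valued
predictors on `ℝ^d` (each `h_y` the indicator of an axis-aligned closed box) shatters some set of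
`n` domains with respect to the recall loss and `γ`. -/
theorem rectangular_shatter
    {𝒴 : Type*} [Fintype 𝒴] [Nonempty 𝒴] [MeasurableSpace 𝒴]
    (d : ℕ) (hd : 1 ≤ d)
    (γ : ℝ) (hγ : γ ∈ Set.Ioo (0 : ℝ) 1) (n : ℕ) :
    ∃ C : Finset (Measure ((Fin d → ℝ) × 𝒴)),
      C.card = n ∧
      (∀ P ∈ C, IsProbabilityMeasure P) ∧
      (∀ P ∈ C, ∀ y : 𝒴, 0 < P {p : (Fin d → ℝ) × 𝒴 | p.2 = y}) ∧
      -- `C` is shattered by the rectangular class w.r.t. `L_recall`, `γ`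
      (∀ C' : Finset (Measure ((Fin d → ℝ) × 𝒴)), C' ⊆ C →
        ∃ l u : 𝒴 → (Fin d → ℝ),
          (∀ P ∈ C',
            γ ≤ recallLoss (fun x : Fin d → ℝ => {y : 𝒴 | x ∈ Set.Icc (l y) (u y)}) P) ∧
          (∀ P ∈ C, P ∉ C' →
            recallLoss (fun x : Fin d → ℝ => {y : 𝒴 | x ∈ Set.Icc (l y) (u y)}) P < γ)) := by
  classical
  obtain ⟨μ, hμ, hsh⟩ := aux_core d hd γ hγ n
  obtain ⟨κ, hκ, hκ0⟩ := aux_labels 𝒴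
  have hinj : Function.Injective fun i => (μ i).prod κ := by
    intro i j hij
    by_contra hne
    obtain ⟨l, u, h1, h2⟩ := hsh {i}
    have a := h1 i (by simp)
    have b := h2 j (by simpa using fun e => hne e.symm)
    have e := congrArg (fun P => recallLoss (fun x => {_y : 𝒴 | x ∈ Icc l u}) P) hij
    simp only [aux_recall _ κ hκ0 _ measurableSet_Icc] at e
    linarith
  refine ⟨Finset.univ.map ⟨_, hinj⟩, by simp, ?_, ?_, ?_⟩
  · intro P hP
    obtain ⟨i, -, rfl⟩ := Finset.mem_map.1 hP
    exact inferInstanceAs (IsProbabilityMeasure ((μ i).prod κ))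
  · intro P hP y
    obtain ⟨i, -, rfl⟩ := Finset.mem_map.1 hP
    have h1 : {p : (Fin d → ℝ) × 𝒴 | p.2 = y} = univ ×ˢ {y} := by ext p; simp
    change 0 < ((μ i).prod κ) _
    rw [h1, Measure.prod_prod, measure_univ, one_mul]
    exact hκ0 y
  · intro C' hC'
    obtain ⟨l, u, h1, h2⟩ := hsh (Finset.univ.filter fun i => (μ i).prod κ ∈ C')
    refine ⟨fun _ => l, fun _ => u, fun P hP => ?_, fun P hP hP' => ?_⟩
    · obtain ⟨i, -, rfl⟩ := Finset.mem_map.1 (hC' hP)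
      refine (h1 i (by simpa using hP)).trans_eq ?_
      exact (aux_recall (μ i) κ hκ0 _ measurableSet_Icc).symm
    · obtain ⟨i, -, rfl⟩ := Finset.mem_map.1 hP
      refine lt_of_eq_of_lt ?_ (h2 i (by simpa using hP'))
      exact aux_recall (μ i) κ hκ0 _ measurableSet_Icc
end

section
/- Fix d ≥ 1, a positive-definite matrix Σ ∈ ℝ^{d×d}, a label y, and γ ∈ (0,1). Consider domains e on ℝ^d × 𝒴 whose conditional distribution of X given Y = y under P_e is N(μ_e, σ_e·Σ) with μ_e ∈ ℝ^d and σ_e > 0. Let H be the class of homogeneous linear binary classifiers h_θ(x) = 𝟙[⟨θ, x⟩ ≥ 0] with θ ∈ ℝ^d ∖ {0}, and define the loss L_y(h, e) = P_e(h(X) = 0 | Y = y). Then H cannot shatter, with respect to L_y and γ, any set of d + 2 such domains: for any domains e_1, …, e_{d+2} of this form, there exists a pattern b ∈ {0,1}^{d+2} such that no θ ∈ ℝ^d ∖ {0} satisfies, for every i, P_{e_i}(⟨θ, X⟩ ≥ 0 | Y = y) ≥ 1−γ if and only if b_i = 1. -/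
open MeasureTheory ProbabilityTheory Matrix Set
open scoped ENNReal NNReal

/-- The multivariate Gaussian measure `N(μ, S)` on `ℝ^d` (for `S` positive-definite), defined by
its density with respect to Lebesgue measure. -/
noncomputable def mvGaussian {d : ℕ} (μ : Fin d → ℝ) (S : Matrix (Fin d) (Fin d) ℝ) :
    Measure (Fin d → ℝ) :=
  MeasureTheory.volume.withDensity fun x =>
    ENNReal.ofReal ((Real.sqrt ((2 * Real.pi) ^ d * S.det))⁻¹ *
      Real.exp (-((x - μ) ⬝ᵥ (S⁻¹ *ᵥ (x - μ))) / 2))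

theorem mvGaussian_smul {d : ℕ} (m : Fin d → ℝ) (S : Matrix (Fin d) (Fin d) ℝ) (hS : S.PosDef)
    (s : ℝ) (hs : 0 < s) (A : Set (Fin d → ℝ)) (hA : MeasurableSet A) :
    mvGaussian m (s • S) A
      = mvGaussian 0 S ((fun z => m + Real.sqrt s • z) ⁻¹' A) := by
  have hr : 0 < Real.sqrt s := Real.sqrt_pos.2 hs
  have hrs : Real.sqrt s * Real.sqrt s = s := Real.mul_self_sqrt hs.le
  generalize Real.sqrt s = r at hr hrs
  have hg : Measurable (fun z : Fin d → ℝ => m + r • z) := by fun_prop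
  have hdet : 0 < S.det := hS.det_pos
  have hinv : (s • S)⁻¹ = s⁻¹ • S⁻¹ := by
    apply Matrix.inv_eq_right_inv
    rw [Matrix.smul_mul, Matrix.mul_smul, smul_smul, mul_inv_cancel₀ hs.ne', one_smul,
      Matrix.mul_nonsing_inv _ (isUnit_iff_ne_zero.2 hdet.ne')]
  unfold mvGaussian
  rw [withDensity_apply _ hA, withDensity_apply _ (hg hA), ← lintegral_indicator hA,
    ← lintegral_indicator (hg hA)]
  set F : (Fin d → ℝ) → ℝ≥0∞ := A.indicator fun x =>
    ENNReal.ofReal ((Real.sqrt ((2 * Real.pi) ^ d * (s • S).det))⁻¹ *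
      Real.exp (-((x - m) ⬝ᵥ ((s • S)⁻¹ *ᵥ (x - m))) / 2)) with hF
  have hFm : Measurable F := by
    apply Measurable.indicator _ hA
    apply Continuous.measurable
    apply ENNReal.continuous_ofReal.comp
    fun_prop
  have h1 : ∫⁻ x, F x = ∫⁻ x, F (m + x) := (lintegral_add_left_eq_self F m).symm
  have h2 : ∫⁻ z, F (m + r • z) = ENNReal.ofReal |(r ^ d)⁻¹| * ∫⁻ x, F (m + x) := by
    have := Measure.map_addHaar_smul (volume : Measure (Fin d → ℝ)) hr.ne'
    rw [Module.finrank_fin_fun] at this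
    rw [← smul_eq_mul, ← lintegral_smul_measure, ← this, lintegral_map (by fun_prop) (by fun_prop)]
  have h3 : ∫⁻ x, F x = ENNReal.ofReal (r ^ d) * ∫⁻ z, F (m + r • z) := by
    rw [h2, h1, ← mul_assoc, ← ENNReal.ofReal_mul (by positivity), abs_of_pos (by positivity),
      mul_inv_cancel₀ (by positivity), ENNReal.ofReal_one, one_mul]
  rw [h3, ← lintegral_const_mul _ (by fun_prop)]
  apply lintegral_congr
  intro z
  by_cases hz : m + r • z ∈ A
  · rw [hF, indicator_of_mem hz, indicator_of_mem (by exact hz), ← ENNReal.ofReal_mul (by positivity)]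
    congr 1
    have e1 : Real.sqrt ((2 * Real.pi) ^ d * (s • S).det)
        = r ^ d * Real.sqrt ((2 * Real.pi) ^ d * S.det) := by
      rw [Matrix.det_smul, Fintype.card_fin, ← hrs, mul_pow r r,
        show (2 * Real.pi) ^ d * (r ^ d * r ^ d * S.det)
          = (r ^ d) ^ 2 * ((2 * Real.pi) ^ d * S.det) by ring,
        Real.sqrt_mul (by positivity), Real.sqrt_sq (by positivity)]
    have e2 : (m + r • z - m) ⬝ᵥ ((s • S)⁻¹ *ᵥ (m + r • z - m)) = (z - 0) ⬝ᵥ (S⁻¹ *ᵥ (z - 0)) := by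
      rw [hinv, add_sub_cancel_left, sub_zero, Matrix.smul_mulVec, Matrix.mulVec_smul,
        smul_dotProduct, dotProduct_smul, dotProduct_smul]
      simp only [smul_eq_mul]
      rw [← hrs]
      field_simp
    rw [e1, e2, mul_inv, ← mul_assoc, ← mul_assoc, mul_inv_cancel₀ (by positivity), one_mul]
  · rw [hF, indicator_of_notMem hz, indicator_of_notMem (by exact hz), mul_zero]

/-- Fix `d ≥ 1`, a positive-definite `Σ`, a label `y` and `γ ∈ (0,1)`.
For domains on `ℝ^d × 𝒴` whose conditional of `X` given `Y = y` is `N(μ_e, σ_e·Σ)`, the class of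
homogeneous linear binary classifiers `h_θ(x) = 𝟙[⟨θ,x⟩ ≥ 0]` cannot shatter any `d + 2` such
domains with respect to `L_y(h,e) = P_e(h(X) = 0 | Y = y)` and `γ`: some coverage pattern
`b ∈ {0,1}^{d+2}` is realized by no `θ ≠ 0`. -/
theorem homogeneous_linear_cannot_shatter_gaussian
    {𝒴 : Type*} [Fintype 𝒴] [Nonempty 𝒴] [MeasurableSpace 𝒴]
    (d : ℕ) (hd : 1 ≤ d)
    (Sig : Matrix (Fin d) (Fin d) ℝ) (hSig : Sig.PosDef)
    (y : 𝒴) (γ : ℝ) (hγ : γ ∈ Set.Ioo (0 : ℝ) 1)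
    (e : Fin (d + 2) → Measure ((Fin d → ℝ) × 𝒴))
    (hprob : ∀ i, IsProbabilityMeasure (e i))
    (hpos : ∀ i, 0 < (e i) {p : (Fin d → ℝ) × 𝒴 | p.2 = y})
    (μ : Fin (d + 2) → (Fin d → ℝ)) (σ : Fin (d + 2) → ℝ) (hσ : ∀ i, 0 < σ i)
    -- each domain's conditional distribution of `X` given `Y = y` is `N(μ_i, σ_i·Σ)`
    (hgauss : ∀ i, ((e i)[|{p : (Fin d → ℝ) × 𝒴 | p.2 = y}]).map Prod.fst =
      mvGaussian (μ i) (σ i • Sig)) :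
    ∃ b : Fin (d + 2) → Bool,
      ¬ ∃ θ : Fin d → ℝ, θ ≠ 0 ∧ ∀ i : Fin (d + 2),
        (1 - γ ≤ (((e i)[|{p : (Fin d → ℝ) × 𝒴 | p.2 = y}])
            {p : (Fin d → ℝ) × 𝒴 | 0 ≤ θ ⬝ᵥ p.1}).toReal ↔ b i = true) := by
  classical
  have hA : ∀ (θ : Fin d → ℝ) (t : ℝ), MeasurableSet {x : Fin d → ℝ | 0 ≤ t + θ ⬝ᵥ x} := by
    intro θ t
    apply IsClosed.measurableSet
    apply isClosed_le continuous_const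
    fun_prop
  have hfin : mvGaussian 0 Sig univ ≠ ∞ := by
    have h := mvGaussian_smul (μ 0) Sig hSig (σ 0) (hσ 0) univ MeasurableSet.univ
    rw [preimage_univ] at h
    have := hprob 0
    rw [← h, ← hgauss 0]
    exact measure_ne_top _ _
  set v : Fin (d + 2) → (Fin d → ℝ) := fun i => (Real.sqrt (σ i))⁻¹ • μ i with hv
  have key : ∀ (θ : Fin d → ℝ) (i : Fin (d + 2)),
      ((e i)[|{p : (Fin d → ℝ) × 𝒴 | p.2 = y}]) {p : (Fin d → ℝ) × 𝒴 | 0 ≤ θ ⬝ᵥ p.1}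
        = mvGaussian 0 Sig {z | 0 ≤ θ ⬝ᵥ v i + θ ⬝ᵥ z} := by
    intro θ i
    have hm : MeasurableSet {x : Fin d → ℝ | 0 ≤ θ ⬝ᵥ x} := by simpa using hA θ 0
    have h1 : ((e i)[|{p : (Fin d → ℝ) × 𝒴 | p.2 = y}]) {p : (Fin d → ℝ) × 𝒴 | 0 ≤ θ ⬝ᵥ p.1}
        = (((e i)[|{p : (Fin d → ℝ) × 𝒴 | p.2 = y}]).map Prod.fst) {x | 0 ≤ θ ⬝ᵥ x} := by
      rw [Measure.map_apply measurable_fst hm]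
      rfl
    rw [h1, hgauss i, mvGaussian_smul _ _ hSig _ (hσ i) _ hm]
    congr 1
    ext z
    have hr : 0 < Real.sqrt (σ i) := Real.sqrt_pos.2 (hσ i)
    simp only [mem_preimage, mem_ofPred_eq, hv, dotProduct_add, dotProduct_smul, smul_eq_mul]
    rw [← mul_nonneg_iff_of_pos_left hr (b := (Real.sqrt (σ i))⁻¹ * _ + _), mul_add, mul_inv_cancel_left₀ hr.ne']
  have hna : ¬ AffineIndependent ℝ v := by
    intro h
    have := h.card_le_finrank_succ
    have h2 := Submodule.finrank_le (vectorSpan ℝ (Set.range v))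
    simp at this h2
    omega
  obtain ⟨I, p, hpI, hpJ⟩ := Convex.radon_partition hna
  refine ⟨fun i => decide (i ∈ I), ?_⟩
  rintro ⟨θ, -, hθ⟩
  simp only [decide_eq_true_eq, key] at hθ
  set U : Set ℝ := {t | 1 - γ ≤ (mvGaussian 0 Sig {z | 0 ≤ t + θ ⬝ᵥ z}).toReal} with hU
  have hUp : IsUpperSet U := by
    intro a b hab ha
    refine le_trans (show 1 - γ ≤ _ from ha) ?_
    apply ENNReal.toReal_mono (ne_top_of_le_ne_top hfin (measure_mono (subset_univ _)))
    apply measure_mono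
    intro z hz
    simp only [mem_ofPred_eq] at hz ⊢
    linarith
  have hl : IsLinearMap ℝ (fun x : Fin d → ℝ => θ ⬝ᵥ x) :=
    ⟨fun a b => dotProduct_add _ _ _, fun c a => dotProduct_smul _ _ _⟩
  have c1 : Convex ℝ ((fun x : Fin d → ℝ => θ ⬝ᵥ x) ⁻¹' U) :=
    hUp.ordConnected.convex.is_linear_preimage hl
  have c2 : Convex ℝ ((fun x : Fin d → ℝ => θ ⬝ᵥ x) ⁻¹' Uᶜ) :=
    hUp.compl.ordConnected.convex.is_linear_preimage hl
  have m1 := convexHull_min (s := v '' I) (by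
    rintro _ ⟨i, hi, rfl⟩
    exact (hθ i).2 hi) c1 hpI
  have m2 := convexHull_min (s := v '' Iᶜ) (by
    rintro _ ⟨i, hi, rfl⟩
    exact fun h => hi ((hθ i).1 h)) c2 hpJ
  exact m2 m1
end
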